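/- The space of vector fields V = (V₁,V₂) with V₁, V₂ ∈ H̃^{-1/2}(Γ), whose distributional divergence div V = ∂V₁/∂x₁ + ∂V₂/∂x₂ and distributional scalar curl curl V = ∂V₁/∂x₂ − ∂V₂/∂x₁ both lie in H̃^{-1/2}(Γ), equipped with the norm whose square is ‖V‖²_H + ‖div V‖²_{H̃^{-1/2}(Γ)} + ‖curl V‖²_{H̃^{-1/2}(Γ)}, is compactly embedded in H = H̃^{-1/2}(Γ) × H̃^{-1/2}(Γ). -/

import Mathlib

noncomputable section

open MeasureTheory Complex Filter Topology
open scoped Real NNReal ContDiff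

/-- The plane `ℝ²`. -/
abbrev R2 : Type := EuclideanSpace ℝ (Fin 2)

/-- Euclidean dot product on `ℝ²`. -/
def rdot (x ξ : R2) : ℝ := x 0 * ξ 0 + x 1 * ξ 1

/-- `testFT φ ξ = ∫ e^{i x·ξ} φ(x) dx`, the (inverse-type) Fourier integral of a
test function `φ`. -/
def testFT (φ : R2 → ℂ) (ξ : R2) : ℂ :=
  ∫ x : R2, Complex.exp (Complex.I * (rdot x ξ : ℂ)) * φ x

/-- The squared `H^s(ℝ²)` norm of the distribution whose Fourier transform is `F`:
`‖f‖² = (2π)⁻² ∫ (1+|ξ|²)^s |f̂(ξ)|² dξ`. -/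
def wnormSq (s : ℝ) (F : R2 → ℂ) : ℝ :=
  ((2 * π) ^ 2)⁻¹ * ∫ ξ : R2, ((1 : ℝ) + ‖ξ‖ ^ 2) ^ s * ‖F ξ‖ ^ 2

/-- The `H^s(ℝ²)` norm (Fourier-side representation). -/
def wnorm (s : ℝ) (F : R2 → ℂ) : ℝ := Real.sqrt (wnormSq s F)

/-- `F` is the Fourier transform of an element of `H^s(ℝ²)`. -/
def MemHs (s : ℝ) (F : R2 → ℂ) : Prop :=
  AEStronglyMeasurable F (volume : Measure R2) ∧
    Integrable (fun ξ : R2 => ((1 : ℝ) + ‖ξ‖ ^ 2) ^ s * ‖F ξ‖ ^ 2) volume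

/-- An element `f` of `H̃^s(Γ)`: a distribution on `ℝ²` of Sobolev regularity `s`
supported in the closure of `Γ`, represented by its Fourier transform `ft`
(a continuous function, `f` being a compactly supported distribution).
The support condition is expressed by testing against smooth compactly supported
functions `φ` whose support avoids `closure Γ`, via the Parseval pairing
`∫ f φ dx = (2π)⁻² ∫ f̂(ξ) φ̌(ξ) dξ` with `φ̌(ξ) = ∫ e^{ix·ξ} φ(x) dx`. -/
structure HTildeElt (s : ℝ) (Γ : Set R2) where
  ft : R2 → ℂ
  cont : Continuous ft
  mem : Integrable (fun ξ : R2 => ((1 : ℝ) + ‖ξ‖ ^ 2) ^ s * ‖ft ξ‖ ^ 2) volume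
  supp : ∀ φ : R2 → ℂ, ContDiff ℝ ∞ φ → HasCompactSupport φ →
    tsupport φ ∩ closure Γ = ∅ → (∫ ξ : R2, ft ξ * testFT φ ξ) = 0

/-- `Γ` is a bounded Lipschitz domain in `ℝ²`: a nonempty bounded open set whose
boundary is locally, after a rigid motion, the graph of a Lipschitz function with
the domain on one side. -/
def IsLipschitzDomain (Γ : Set R2) : Prop :=
  IsOpen Γ ∧ Bornology.IsBounded Γ ∧ Γ.Nonempty ∧
    ∀ x ∈ frontier Γ, ∃ (e : R2 ≃ₗᵢ[ℝ] R2) (L : ℝ≥0) (f : ℝ → ℝ) (U : Set R2),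
      LipschitzWith L f ∧ IsOpen U ∧ x ∈ U ∧
        ∀ y ∈ U, (y ∈ Γ ↔ f (e y 0) < e y 1)

/-- `ξ·V̂(ξ)`, i.e. `-i` times the Fourier transform of `div V`. -/
def dotFt (F1 F2 : R2 → ℂ) (ξ : R2) : ℂ := (ξ 0 : ℂ) * F1 ξ + (ξ 1 : ℂ) * F2 ξ

/-- `ξ⊥·V̂(ξ)`, i.e. `-i` times the Fourier transform of `curl V`. -/
def curlFt (F1 F2 : R2 → ℂ) (ξ : R2) : ℂ := (ξ 1 : ℂ) * F1 ξ - (ξ 0 : ℂ) * F2 ξ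

/-- An element of `X = H̃^{-1/2}_div(Γ)`: a pair of elements of `H̃^{-1/2}(Γ)`
whose distributional divergence also belongs to `H̃^{-1/2}(Γ)`. -/
structure Xelt (Γ : Set R2) where
  c1 : HTildeElt (-(1/2) : ℝ) Γ
  c2 : HTildeElt (-(1/2) : ℝ) Γ
  divMem : Integrable (fun ξ : R2 =>
    ((1 : ℝ) + ‖ξ‖ ^ 2) ^ (-(1/2) : ℝ) * ‖dotFt c1.ft c2.ft ξ‖ ^ 2) volume

/-- The Fourier transform of `div V`. -/
def divFt {Γ : Set R2} (V : Xelt Γ) (ξ : R2) : ℂ :=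
  Complex.I * dotFt V.c1.ft V.c2.ft ξ

/-- The squared `H`-norm `‖V‖²_H` of a vector field. -/
def HnormSq {Γ : Set R2} (V : Xelt Γ) : ℝ :=
  wnormSq (-(1/2)) V.c1.ft + wnormSq (-(1/2)) V.c2.ft

/-- The squared `X`-norm `‖V‖²_X = ‖V‖²_H + ‖div V‖²_{H̃^{-1/2}}`. -/
def XnormSq {Γ : Set R2} (V : Xelt Γ) : ℝ :=
  HnormSq V + wnormSq (-(1/2)) (divFt V)

/-- The `X`-norm. -/
def Xnorm {Γ : Set R2} (V : Xelt Γ) : ℝ := Real.sqrt (XnormSq V)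

/-- `ĝ₀(ξ) = i/√(k²-|ξ|²)`, with the branch `√(k²-|ξ|²) = i√(|ξ|²-k²)` for `|ξ| > k`. -/
def g0hat (k : ℝ) (ξ : R2) : ℂ :=
  if ‖ξ‖ < k then Complex.I / ((Real.sqrt (k ^ 2 - ‖ξ‖ ^ 2) : ℝ) : ℂ)
  else 1 / ((Real.sqrt (‖ξ‖ ^ 2 - k ^ 2) : ℝ) : ℂ)

/-- The integrand of the sesquilinear form `B`:
`ĝ₀(ξ) [ (|ξ|²-k²) a₁ b̄₁ - k² a₂ b̄₂ ]` with `a₁ = ξ·Ŵ/|ξ|`, `a₂ = ξ⊥·Ŵ/|ξ|`, etc. -/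
def Bintegrand (k : ℝ) (F1 F2 G1 G2 : R2 → ℂ) (ξ : R2) : ℂ :=
  g0hat k ξ *
    (((‖ξ‖ ^ 2 - k ^ 2 : ℝ) : ℂ) * (dotFt F1 F2 ξ * starRingEnd ℂ (dotFt G1 G2 ξ)) -
      ((k ^ 2 : ℝ) : ℂ) * (curlFt F1 F2 ξ * starRingEnd ℂ (curlFt G1 G2 ξ))) /
    ((‖ξ‖ ^ 2 : ℝ) : ℂ)

/-- The sesquilinear form `B(W,V)`. -/
def Bform (k : ℝ) {Γ : Set R2} (W V : Xelt Γ) : ℂ :=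
  ∫ ξ : R2, Bintegrand k W.c1.ft W.c2.ft V.c1.ft V.c2.ft ξ

/-- The sesquilinear form `E(q,V) = B(curl⃗ q, V)`, where
`curl⃗ q = (∂q/∂x₂, -∂q/∂x₁)` has Fourier transform `(iξ₂ q̂, -iξ₁ q̂)`. -/
def Eform (k : ℝ) {Γ : Set R2} (q : HTildeElt (1/2 : ℝ) Γ) (V : Xelt Γ) : ℂ :=
  ∫ ξ : R2, Bintegrand k (fun η => Complex.I * (η 1 : ℂ) * q.ft η)
      (fun η => -(Complex.I * (η 0 : ℂ) * q.ft η)) V.c1.ft V.c2.ft ξ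

/-- The inner product of the Hilbert space `X`; by the Riesz representation
theorem, every bounded conjugate-linear functional on `X` is `V ↦ Xinner Y V`
for a unique `Y ∈ X`, with functional norm `Xnorm Y`. -/
def Xinner {Γ : Set R2} (Y V : Xelt Γ) : ℂ :=
  ((((2 * π) ^ 2)⁻¹ : ℝ) : ℂ) * ∫ ξ : R2, ((((1 : ℝ) + ‖ξ‖ ^ 2) ^ (-(1/2) : ℝ) : ℝ) : ℂ) *
    (Y.c1.ft ξ * starRingEnd ℂ (V.c1.ft ξ) + Y.c2.ft ξ * starRingEnd ℂ (V.c2.ft ξ) +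
      divFt Y ξ * starRingEnd ℂ (divFt V ξ))

/-- `√(k²-|ξ|²)`, with the branch `i√(|ξ|²-k²)` for `|ξ| > k`. -/
def rootk (k : ℝ) (ξ : R2) : ℂ :=
  if ‖ξ‖ < k then ((Real.sqrt (k ^ 2 - ‖ξ‖ ^ 2) : ℝ) : ℂ)
  else Complex.I * ((Real.sqrt (‖ξ‖ ^ 2 - k ^ 2) : ℝ) : ℂ)

/-- The Fourier multiplier `i/(2√(k²-|ξ|²))` of the Helmholtz single-layer
operator `T` with kernel `e^{ik|x-y|}/(4π|x-y|)`. -/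
def mT (k : ℝ) (ξ : R2) : ℂ := Complex.I / (2 * rootk k ξ)

/-- The Fourier multiplier `1/(2|ξ|)` of the Laplace single-layer operator `T₀`
with kernel `1/(4π|x-y|)`. -/
def mT0 (ξ : R2) : ℂ := 1 / (2 * ((‖ξ‖ : ℝ) : ℂ))

/-- The Fourier multiplier of `R = T - T₀`. -/
def mR (k : ℝ) (ξ : R2) : ℂ := mT k ξ - mT0 ξ

/-- The distributions with Fourier data `G` and `E` have the same restriction to
the open set `Γ`: `⟨G - E, φ⟩ = 0` for all smooth `φ` compactly supported in `Γ`
(pairing written on the Fourier side). -/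
def AgreeOn (Γ : Set R2) (G E : R2 → ℂ) : Prop :=
  ∀ φ : R2 → ℂ, ContDiff ℝ ∞ φ → HasCompactSupport φ → tsupport φ ⊆ Γ →
    (∫ ξ : R2, (G ξ - E ξ) * testFT φ ξ) = 0

/-- The duality pairing `⟨f, ψ⟩` between `H^{1/2}(Γ)` and `H̃^{-1/2}(Γ)`, written
on the Fourier side (Plancherel): `(2π)⁻² ∫ f̂(ξ) conj(ψ̂(ξ)) dξ`, where `G = f̂`
is the Fourier data of (an extension of) `f`. -/
def dualPair (G ψ : R2 → ℂ) : ℂ :=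
  ((((2 * π) ^ 2)⁻¹ : ℝ) : ℂ) * ∫ ξ : R2, G ξ * starRingEnd ℂ (ψ ξ)

open FourierTransform SchwartzMap

/-!
The Fourier transforms of `div V` and `curl V` are `i ξ·V̂` and, up to sign, `i ξ⊥·V̂`, whose
squared moduli add up to `|ξ|² |V̂|²`. Controlling `V`, `div V` and `curl V` in `H^s` is
therefore the same as controlling `V` in `H^{s+1}`, and what remains is Rellich's theorem for
distributions supported in a fixed compact set. When `s + 1 ≥ 0` these are `L²` functions, and
the value of their Fourier transform at a given frequency is an inner product with a truncated
character. Hence weak sequential compactness in `L²` gives a subsequence whose Fourier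
transforms are uniformly bounded and converge pointwise; the `H^s` norm of the difference to the
limit is small over large balls by dominated convergence, and small outside by the uniform
`H^{s+1}` bound.
-/

section WeakCompactness

variable {𝕜 H : Type*} [RCLike 𝕜] [NormedAddCommGroup H] [InnerProductSpace 𝕜 H]
  [CompleteSpace H] [TopologicalSpace.SeparableSpace H]

theorem exists_subseq_tendsto_inner_of_norm_le {f : ℕ → H} {C : ℝ} (hf : ∀ n, ‖f n‖ ≤ C) :
    ∃ φ : ℕ → ℕ, StrictMono φ ∧
      ∃ g : H, ∀ h, Tendsto (fun n => inner 𝕜 h (f (φ n))) atTop (𝓝 (inner 𝕜 h g)) := by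
  obtain ⟨ℓ, -, φ, hφ, hlim⟩ := WeakDual.isSeqCompact_closedBall 𝕜 H 0 C
    (x := fun n => StrongDual.toWeakDual (InnerProductSpace.toDual 𝕜 H (f n)))
    (fun n => by simpa using hf n)
  refine ⟨φ, hφ, (InnerProductSpace.toDual 𝕜 H).symm (WeakDual.toStrongDual ℓ), fun h => ?_⟩
  have hconj : Tendsto (fun n => inner 𝕜 (f (φ n)) h) atTop
      (𝓝 (inner 𝕜 ((InnerProductSpace.toDual 𝕜 H).symm (WeakDual.toStrongDual ℓ)) h)) := by
    rw [InnerProductSpace.toDual_symm_apply]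
    exact ((WeakDual.eval_continuous h).tendsto ℓ).comp hlim
  simpa only [inner_conj_symm, Function.comp_def] using
    (RCLike.continuous_conj.tendsto _).comp hconj

end WeakCompactness

section Integral

variable {α : Type*} [MeasurableSpace α] {μ : Measure α}

theorem integrable_and_integral_le_of_tendsto {f : ℕ → α → ℝ} {g : α → ℝ} {D : ℝ}
    (hf₀ : ∀ n, 0 ≤ᵐ[μ] f n) (hf : ∀ n, Integrable (f n) μ) (hD : ∀ n, ∫ x, f n x ∂μ ≤ D)
    (hlim : ∀ᵐ x ∂μ, Tendsto (fun n => f n x) atTop (𝓝 (g x))) :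
    Integrable g μ ∧ ∫ x, g x ∂μ ≤ D := by
  have hg₀ : 0 ≤ᵐ[μ] g := by
    filter_upwards [hlim, ae_all_iff.2 hf₀] with x hx hx₀
    exact ge_of_tendsto' hx hx₀
  have hg_lintegral : ∫⁻ x, ENNReal.ofReal (g x) ∂μ ≤ ENNReal.ofReal D :=
    calc ∫⁻ x, ENNReal.ofReal (g x) ∂μ
        = ∫⁻ x, liminf (fun n => ENNReal.ofReal (f n x)) atTop ∂μ := by
          refine lintegral_congr_ae (hlim.mono fun x hx => ?_)
          exact ((ENNReal.continuous_ofReal.tendsto _).comp hx).liminf_eq.symm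
      _ ≤ liminf (fun n => ∫⁻ x, ENNReal.ofReal (f n x) ∂μ) atTop :=
          lintegral_liminf_le' fun n => (hf n).aemeasurable.ennreal_ofReal
      _ ≤ ENNReal.ofReal D := by
          refine liminf_le_of_frequently_le' (Frequently.of_forall fun n => ?_)
          rw [← ofReal_integral_eq_lintegral_ofReal (hf n) (hf₀ n)]
          exact ENNReal.ofReal_le_ofReal (hD n)
  have hg : Integrable g μ :=
    (lintegral_ofReal_ne_top_iff_integrable
      (aestronglyMeasurable_of_tendsto_ae atTop (fun n => (hf n).aestronglyMeasurable) hlim)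
      hg₀).1 (hg_lintegral.trans_lt ENNReal.ofReal_lt_top).ne
  refine ⟨hg, ?_⟩
  rw [← ofReal_integral_eq_lintegral_ofReal hg hg₀] at hg_lintegral
  exact (ENNReal.ofReal_le_ofReal_iff
    ((integral_nonneg_of_ae (hf₀ 0)).trans (hD 0))).1 hg_lintegral

theorem norm_toLp_two_sq {F : Type*} [NormedAddCommGroup F] {f : α → F} (hf : MemLp f 2 μ) :
    ‖hf.toLp f‖ ^ 2 = ∫ x, ‖f x‖ ^ 2 ∂μ := by
  rw [Lp.norm_toLp, hf.eLpNorm_eq_integral_rpow_norm two_ne_zero ENNReal.ofNat_ne_top,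
    ENNReal.toReal_ofReal (by positivity), ← Real.rpow_mul_natCast (by positivity)]
  simp

end Integral

section FourierL2

variable {E F : Type*} [NormedAddCommGroup E] [InnerProductSpace ℝ E] [FiniteDimensional ℝ E]
  [MeasurableSpace E] [BorelSpace E] [NormedAddCommGroup F]

theorem integrable_indicator_Lp_two {K : Set E} (hK : IsCompact K)
    (f : Lp F 2 (volume : Measure E)) : Integrable (K.indicator f) :=
  (integrable_indicator_iff hK.measurableSet).2
    (((Lp.memLp f).locallyIntegrable (by norm_num)).integrableOn_isCompact hK)

theorem continuous_fourier_of_integrable [NormedSpace ℂ F] {f : E → F} (hf : Integrable f) :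
    Continuous (𝓕 f) :=
  VectorFourier.fourierIntegral_continuous Real.continuous_fourierChar
    (by exact continuous_inner) hf

theorem continuous_fourier_indicator [NormedSpace ℂ F] {K : Set E} (hK : IsCompact K)
    (f : Lp F 2 (volume : Measure E)) : Continuous (𝓕 (K.indicator f)) :=
  continuous_fourier_of_integrable (integrable_indicator_Lp_two hK f)

variable [InnerProductSpace ℂ F] [CompleteSpace F]

theorem integral_smul_Lp_fourier (ψ : 𝓢(E, ℂ)) (f : Lp F 2 (volume : Measure E)) :
    ∫ x, ψ x • (𝓕 f : Lp F 2 (volume : Measure E)) x = ∫ x, 𝓕 (ψ : E → ℂ) x • f x := by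
  have h := congrArg (fun T => T ψ) (Lp.fourier_toTemperedDistribution_eq f)
  simp only [TemperedDistribution.fourier_apply, Lp.toTemperedDistribution_apply,
    SchwartzMap.fourier_coe] at h
  exact h.symm

theorem integral_smul_Lp_fourierInv (ψ : 𝓢(E, ℂ)) (f : Lp F 2 (volume : Measure E)) :
    ∫ x, ψ x • (𝓕⁻ f : Lp F 2 (volume : Measure E)) x = ∫ x, 𝓕⁻ (ψ : E → ℂ) x • f x := by
  have h := congrArg (fun T => T ψ) (Lp.fourierInv_toTemperedDistribution_eq f)
  simp only [TemperedDistribution.fourierInv_apply, Lp.toTemperedDistribution_apply,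
    SchwartzMap.fourierInv_coe] at h
  exact h.symm

theorem Lp_fourier_ae_eq_fourier {f : Lp F 2 (volume : Measure E)} (hf : Integrable f) :
    (𝓕 f : Lp F 2 (volume : Measure E)) =ᵐ[volume] 𝓕 (f : E → F) := by
  refine ae_eq_of_integral_contDiff_smul_eq
    ((Lp.memLp _).locallyIntegrable (by norm_num))
    (continuous_fourier_of_integrable hf).locallyIntegrable fun g hg hg_supp => ?_
  let ψ : 𝓢(E, ℂ) :=
    HasCompactSupport.toSchwartzMap (f := Complex.ofRealCLM ∘ g) (hg_supp.comp_left rfl)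
      (by fun_prop)
  have hψ : ∀ (x : E) (v : F), ψ x • v = g x • v := fun x v => Complex.coe_smul (g x) v
  calc ∫ x, g x • (𝓕 f : Lp F 2 (volume : Measure E)) x
      = ∫ x, 𝓕 (ψ : E → ℂ) x • f x := by
        simp only [← hψ, integral_smul_Lp_fourier]
    _ = ∫ x, ψ x • 𝓕 (f : E → F) x := by
        have h := VectorFourier.integral_fourierIntegral_smul_eq_flip (μ := volume) (ν := volume)
          (L := innerₗ E) Real.continuous_fourierChar (by exact continuous_inner)
          ψ.integrable hf
        rwa [flip_innerₗ] at h
    _ = ∫ x, g x • 𝓕 (f : E → F) x := by simp only [hψ]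

theorem Lp_fourierInv_ae_eq_zero_of_isOpen {U : Set E} (hU : IsOpen U)
    {G : Lp F 2 (volume : Measure E)}
    (hG : ∀ φ : E → ℂ, ContDiff ℝ ∞ φ → HasCompactSupport φ → tsupport φ ⊆ U →
      ∫ x, 𝓕⁻ φ x • G x = 0) :
    ∀ᵐ x, x ∈ U → (𝓕⁻ G : Lp F 2 (volume : Measure E)) x = 0 := by
  refine hU.ae_eq_zero_of_integral_contDiff_smul_eq_zero
    (((Lp.memLp _).locallyIntegrable (by norm_num)).locallyIntegrableOn _)
    fun g hg hg_supp hgU => ?_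
  have hcont : ContDiff ℝ ∞ (Complex.ofRealCLM ∘ g) := by fun_prop
  have hcomp : HasCompactSupport (Complex.ofRealCLM ∘ g) := hg_supp.comp_left rfl
  calc ∫ x, g x • (𝓕⁻ G : Lp F 2 (volume : Measure E)) x
      = ∫ x, hcomp.toSchwartzMap hcont x • (𝓕⁻ G : Lp F 2 (volume : Measure E)) x :=
        integral_congr_ae (.of_forall fun x => (Complex.coe_smul (g x) _).symm)
    _ = ∫ x, 𝓕⁻ (Complex.ofRealCLM ∘ g) x • G x := integral_smul_Lp_fourierInv _ G
    _ = 0 := hG _ hcont hcomp ((tsupport_comp_subset rfl g).trans hgU)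

theorem exists_eq_fourier_indicator {K : Set E} (hK : IsCompact K) {G : E → F}
    (hG : Continuous G) (hG₂ : MemLp G 2)
    (hsupp : ∀ φ : E → ℂ, ContDiff ℝ ∞ φ → HasCompactSupport φ → tsupport φ ⊆ Kᶜ →
      ∫ x, 𝓕⁻ φ x • G x = 0) :
    ∃ f : Lp F 2 (volume : Measure E), ‖f‖ = ‖hG₂.toLp G‖ ∧ G = 𝓕 (K.indicator f) := by
  let f : Lp F 2 (volume : Measure E) := 𝓕⁻ (hG₂.toLp G)
  have hFf : 𝓕 f = hG₂.toLp G := fourier_fourierInv_eq _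
  have hf_zero : ∀ᵐ x, x ∈ Kᶜ → f x = 0 := by
    refine Lp_fourierInv_ae_eq_zero_of_isOpen hK.isClosed.isOpen_compl fun φ hφ hφ₁ hφ₂ => ?_
    rw [← hsupp φ hφ hφ₁ hφ₂]
    exact integral_congr_ae (hG₂.coeFn_toLp.mono fun x hx => by simp only [hx])
  have hf_ind : K.indicator f =ᵐ[volume] f := by
    filter_upwards [hf_zero] with x hx
    exact Set.indicator_apply_eq_self.2 hx
  refine ⟨f, by rw [← hFf, Lp.norm_fourier_eq], ?_⟩
  refine (hG.ae_eq_iff_eq volume (continuous_fourier_indicator hK f)).1 ?_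
  calc G =ᵐ[volume] hG₂.toLp G := hG₂.coeFn_toLp.symm
    _ =ᵐ[volume] 𝓕 (f : E → F) := by
      rw [← hFf]
      exact Lp_fourier_ae_eq_fourier ((integrable_indicator_Lp_two hK f).congr hf_ind)
    _ = 𝓕 (K.indicator f) := funext (Real.fourier_congr_ae hf_ind.symm)

end FourierL2

section FourierKernel

variable {E : Type*} [NormedAddCommGroup E] [InnerProductSpace ℝ E] [FiniteDimensional ℝ E]
  [MeasurableSpace E] [BorelSpace E] {K : Set E}

theorem memLp_indicator_fourierChar (hK : IsCompact K) (w : E) :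
    MemLp (K.indicator fun v => (Real.fourierChar (inner ℝ v w) : ℂ)) 2 := by
  have hcont : Continuous fun v : E => (Real.fourierChar (inner ℝ v w) : ℂ) := by
    have := Real.continuous_fourierChar
    fun_prop
  have : IsFiniteMeasure (volume.restrict K) := ⟨by simpa using hK.measure_lt_top⟩
  rw [memLp_indicator_iff_restrict hK.measurableSet]
  exact .of_bound hcont.aestronglyMeasurable 1 (.of_forall fun v => (Circle.norm_coe _).le)

/-- The truncated character `v ↦ 𝟙_K(v) e^{2πi⟨v, w⟩}` as an element of `L²`. It represents
evaluation at `w` of the Fourier transform of functions supported in `K`. -/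
def fourierKernel (hK : IsCompact K) (w : E) : Lp ℂ 2 (volume : Measure E) :=
  (memLp_indicator_fourierChar hK w).toLp _

theorem norm_fourierKernel_le (hK : IsCompact K) (w : E) :
    ‖fourierKernel hK w‖ ≤ √(volume.real K) := by
  have hbound : eLpNorm (fun v => (Real.fourierChar (inner ℝ v w) : ℂ)) 2 (volume.restrict K) ≤
      volume K ^ (2 : ℝ)⁻¹ := by
    simpa using eLpNorm_le_of_ae_bound (p := 2) (μ := volume.restrict K)
      (.of_forall fun v : E => (Circle.norm_coe (Real.fourierChar (inner ℝ v w))).le)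
  rw [fourierKernel, Lp.norm_toLp, eLpNorm_indicator_eq_eLpNorm_restrict hK.measurableSet,
    Real.sqrt_eq_rpow, one_div, Measure.real, ENNReal.toReal_rpow]
  exact ENNReal.toReal_mono (by simp [hK.measure_lt_top.ne]) hbound

theorem inner_fourierKernel (hK : IsCompact K) (w : E) (f : Lp ℂ 2 (volume : Measure E)) :
    inner ℂ (fourierKernel hK w) f = 𝓕 (K.indicator f) w := by
  rw [L2.inner_def, Real.fourier_eq]
  refine integral_congr_ae ?_
  filter_upwards [(memLp_indicator_fourierChar hK w).coeFn_toLp] with v hv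
  rw [fourierKernel, hv]
  by_cases hvK : v ∈ K
  · simp [hvK, Circle.smul_def, mul_comm, AddChar.map_neg_eq_inv]
  · simp [hvK]

theorem norm_fourier_indicator_le (hK : IsCompact K) (f : Lp ℂ 2 (volume : Measure E)) (w : E) :
    ‖𝓕 (K.indicator f) w‖ ≤ √(volume.real K) * ‖f‖ := by
  rw [← inner_fourierKernel hK]
  exact (norm_inner_le_norm _ _).trans (by gcongr; exact norm_fourierKernel_le hK w)

theorem exists_subseq_tendsto_fourier_indicator (hK : IsCompact K)
    {f : ℕ → Lp ℂ 2 (volume : Measure E)} {C : ℝ} (hf : ∀ n, ‖f n‖ ≤ C) :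
    ∃ φ : ℕ → ℕ, StrictMono φ ∧ ∃ g : Lp ℂ 2 (volume : Measure E),
      ∀ w, Tendsto (fun n => 𝓕 (K.indicator (f (φ n))) w) atTop (𝓝 (𝓕 (K.indicator g) w)) := by
  have : Fact ((2 : ENNReal) ≠ ⊤) := ⟨by simp⟩
  obtain ⟨φ, hφ, g, hg⟩ := exists_subseq_tendsto_inner_of_norm_le (𝕜 := ℂ) hf
  refine ⟨φ, hφ, g, fun w => ?_⟩
  simpa only [inner_fourierKernel] using hg (fourierKernel hK w)

end FourierKernel

section SobolevWeight

variable {E : Type*} [SeminormedAddCommGroup E]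

theorem continuous_one_add_norm_sq_rpow (s : ℝ) :
    Continuous fun ξ : E => ((1 : ℝ) + ‖ξ‖ ^ 2) ^ s :=
  Continuous.rpow_const (by fun_prop) fun ξ => .inl (by positivity)

theorem one_add_norm_sq_rpow_le_of_le_norm {s t R : ℝ} (hst : s ≤ t) (hR : 0 ≤ R) {ξ : E}
    (hξ : R ≤ ‖ξ‖) :
    ((1 : ℝ) + ‖ξ‖ ^ 2) ^ s ≤ (1 + R ^ 2) ^ (s - t) * (1 + ‖ξ‖ ^ 2) ^ t :=
  calc ((1 : ℝ) + ‖ξ‖ ^ 2) ^ s = (1 + ‖ξ‖ ^ 2) ^ (s - t) * (1 + ‖ξ‖ ^ 2) ^ t := by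
        rw [← Real.rpow_add (by positivity), sub_add_cancel]
    _ ≤ (1 + R ^ 2) ^ (s - t) * (1 + ‖ξ‖ ^ 2) ^ t := by
        gcongr ?_ * _
        exact Real.rpow_le_rpow_of_nonpos (by positivity) (by gcongr) (sub_nonpos.2 hst)

theorem one_add_norm_sq_rpow_mono {s t : ℝ} (hst : s ≤ t) (ξ : E) :
    ((1 : ℝ) + ‖ξ‖ ^ 2) ^ s ≤ (1 + ‖ξ‖ ^ 2) ^ t :=
  Real.rpow_le_rpow_of_exponent_le (le_add_of_nonneg_right (by positivity)) hst

end SobolevWeight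

section SobolevNorm

variable {s t D : ℝ} {F G : R2 → ℂ}

theorem wnormSq_nonneg (s : ℝ) (F : R2 → ℂ) : 0 ≤ wnormSq s F :=
  mul_nonneg (by positivity) (integral_nonneg fun ξ => by positivity)

theorem aestronglyMeasurable_weight_mul_norm_sq (s : ℝ) (hF : AEStronglyMeasurable F) :
    AEStronglyMeasurable fun ξ => ((1 : ℝ) + ‖ξ‖ ^ 2) ^ s * ‖F ξ‖ ^ 2 :=
  (continuous_one_add_norm_sq_rpow s).aestronglyMeasurable.mul (hF.norm.pow 2)

theorem memHs_of_weight_mul_norm_sq_le {g : R2 → ℝ} (hg : Integrable g)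
    (hF : AEStronglyMeasurable F) (hFg : ∀ ξ, ((1 : ℝ) + ‖ξ‖ ^ 2) ^ s * ‖F ξ‖ ^ 2 ≤ g ξ) :
    MemHs s F :=
  ⟨hF, hg.mono' (aestronglyMeasurable_weight_mul_norm_sq s hF)
    (.of_forall fun ξ => (Real.norm_of_nonneg (by positivity)).trans_le (hFg ξ))⟩

theorem MemHs.mono (hF : MemHs t F) (hst : s ≤ t) : MemHs s F :=
  memHs_of_weight_mul_norm_sq_le hF.2 hF.1 fun ξ => by
    gcongr ?_ * _
    exact one_add_norm_sq_rpow_mono hst ξ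

theorem MemHs.wnormSq_mono (hF : MemHs t F) (hst : s ≤ t) : wnormSq s F ≤ wnormSq t F :=
  mul_le_mul_of_nonneg_left (integral_mono (hF.mono hst).2 hF.2 fun ξ =>
    mul_le_mul_of_nonneg_right (one_add_norm_sq_rpow_mono hst ξ) (by positivity)) (by positivity)

theorem weight_mul_norm_sub_sq_le (s : ℝ) (F G : R2 → ℂ) (ξ : R2) :
    ((1 : ℝ) + ‖ξ‖ ^ 2) ^ s * ‖F ξ - G ξ‖ ^ 2 ≤
      2 * (((1 : ℝ) + ‖ξ‖ ^ 2) ^ s * ‖F ξ‖ ^ 2) + 2 * (((1 : ℝ) + ‖ξ‖ ^ 2) ^ s * ‖G ξ‖ ^ 2) := by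
  have hsub : ‖F ξ - G ξ‖ ^ 2 ≤ 2 * ‖F ξ‖ ^ 2 + 2 * ‖G ξ‖ ^ 2 := by
    linarith [parallelogram_law_with_norm ℝ (F ξ) (G ξ), mul_self_nonneg ‖F ξ + G ξ‖]
  calc ((1 : ℝ) + ‖ξ‖ ^ 2) ^ s * ‖F ξ - G ξ‖ ^ 2
      ≤ ((1 : ℝ) + ‖ξ‖ ^ 2) ^ s * (2 * ‖F ξ‖ ^ 2 + 2 * ‖G ξ‖ ^ 2) := by gcongr
    _ = _ := by ring

theorem MemHs.sub (hF : MemHs s F) (hG : MemHs s G) : MemHs s fun ξ => F ξ - G ξ :=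
  memHs_of_weight_mul_norm_sq_le ((hF.2.const_mul 2).add (hG.2.const_mul 2)) (hF.1.sub hG.1)
    (weight_mul_norm_sub_sq_le s F G)

theorem MemHs.wnormSq_sub_le (hF : MemHs s F) (hG : MemHs s G) :
    wnormSq s (fun ξ => F ξ - G ξ) ≤ 2 * wnormSq s F + 2 * wnormSq s G := by
  have hint := integral_mono (hF.sub hG).2 ((hF.2.const_mul 2).add (hG.2.const_mul 2))
    (weight_mul_norm_sub_sq_le s F G)
  simp only [Pi.add_apply] at hint
  rw [integral_add (hF.2.const_mul 2) (hG.2.const_mul 2), integral_const_mul,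
    integral_const_mul] at hint
  calc wnormSq s (fun ξ => F ξ - G ξ) ≤ ((2 * π) ^ 2)⁻¹ * _ :=
        mul_le_mul_of_nonneg_left hint (by positivity)
    _ = 2 * wnormSq s F + 2 * wnormSq s G := by
        simp only [wnormSq]
        ring

theorem memHs_and_wnormSq_le_of_tendsto {F : ℕ → R2 → ℂ} {L : R2 → ℂ}
    (hF : ∀ n, MemHs s (F n)) (hD : ∀ n, wnormSq s (F n) ≤ D)
    (hlim : ∀ ξ, Tendsto (fun n => F n ξ) atTop (𝓝 (L ξ))) :
    MemHs s L ∧ wnormSq s L ≤ D := by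
  obtain ⟨hL, hLD⟩ := integrable_and_integral_le_of_tendsto (μ := volume) (D := (2 * π) ^ 2 * D)
    (fun n => .of_forall fun ξ => by positivity) (fun n => (hF n).2)
    (fun n => (inv_mul_le_iff₀ (by positivity)).1 (hD n))
    (.of_forall fun ξ => ((hlim ξ).norm.pow 2).const_mul _)
  exact ⟨⟨aestronglyMeasurable_of_tendsto_ae atTop (fun n => (hF n).1) (.of_forall hlim), hL⟩,
    (inv_mul_le_iff₀ (by positivity)).2 hLD⟩

theorem MemHs.setIntegral_compl_closedBall_le {R : ℝ} (hF : MemHs t F) (hst : s ≤ t)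
    (hR : 0 ≤ R) :
    ∫ ξ in (Metric.closedBall 0 R)ᶜ, ((1 : ℝ) + ‖ξ‖ ^ 2) ^ s * ‖F ξ‖ ^ 2 ≤
      (1 + R ^ 2) ^ (s - t) * ∫ ξ, ((1 : ℝ) + ‖ξ‖ ^ 2) ^ t * ‖F ξ‖ ^ 2 :=
  calc ∫ ξ in (Metric.closedBall 0 R)ᶜ, ((1 : ℝ) + ‖ξ‖ ^ 2) ^ s * ‖F ξ‖ ^ 2
      ≤ ∫ ξ in (Metric.closedBall 0 R)ᶜ,
          (1 + R ^ 2) ^ (s - t) * (((1 : ℝ) + ‖ξ‖ ^ 2) ^ t * ‖F ξ‖ ^ 2) := by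
        refine setIntegral_mono_on (hF.mono hst).2.integrableOn (hF.2.const_mul _).integrableOn
          measurableSet_closedBall.compl fun ξ hξ => ?_
        have hξR : R ≤ ‖ξ‖ := (not_le.1 (mt mem_closedBall_zero_iff.2 hξ)).le
        rw [← mul_assoc]
        gcongr
        exact one_add_norm_sq_rpow_le_of_le_norm hst hR hξR
    _ ≤ ∫ ξ, (1 + R ^ 2) ^ (s - t) * (((1 : ℝ) + ‖ξ‖ ^ 2) ^ t * ‖F ξ‖ ^ 2) :=
        setIntegral_le_integral (hF.2.const_mul _) (.of_forall fun ξ => by positivity)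
    _ = _ := integral_const_mul _ _

theorem MemHs.wnormSq_le_setIntegral_closedBall_add {R : ℝ} (hF : MemHs t F) (hst : s ≤ t)
    (hR : 0 ≤ R) :
    wnormSq s F ≤
      ((2 * π) ^ 2)⁻¹ * (∫ ξ in Metric.closedBall 0 R, ((1 : ℝ) + ‖ξ‖ ^ 2) ^ s * ‖F ξ‖ ^ 2) +
        (1 + R ^ 2) ^ (s - t) * wnormSq t F :=
  calc wnormSq s F = ((2 * π) ^ 2)⁻¹ *
        ((∫ ξ in Metric.closedBall 0 R, ((1 : ℝ) + ‖ξ‖ ^ 2) ^ s * ‖F ξ‖ ^ 2) +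
          ∫ ξ in (Metric.closedBall 0 R)ᶜ, ((1 : ℝ) + ‖ξ‖ ^ 2) ^ s * ‖F ξ‖ ^ 2) := by
        rw [integral_add_compl measurableSet_closedBall (hF.mono hst).2, wnormSq]
    _ ≤ ((2 * π) ^ 2)⁻¹ *
        ((∫ ξ in Metric.closedBall 0 R, ((1 : ℝ) + ‖ξ‖ ^ 2) ^ s * ‖F ξ‖ ^ 2) +
          (1 + R ^ 2) ^ (s - t) * ∫ ξ, ((1 : ℝ) + ‖ξ‖ ^ 2) ^ t * ‖F ξ‖ ^ 2) := by
        gcongr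
        exact hF.setIntegral_compl_closedBall_le hst hR
    _ = _ := by
        rw [wnormSq]
        ring

theorem tendsto_setIntegral_weight_mul_norm_sq_zero {K : Set R2} (hK : IsCompact K) (s : ℝ)
    {F : ℕ → R2 → ℂ} {B : ℝ} (hF : ∀ n, AEStronglyMeasurable (F n)) (hB : ∀ n ξ, ‖F n ξ‖ ≤ B)
    (hlim : ∀ ξ, Tendsto (fun n => F n ξ) atTop (𝓝 0)) :
    Tendsto (fun n => ∫ ξ in K, ((1 : ℝ) + ‖ξ‖ ^ 2) ^ s * ‖F n ξ‖ ^ 2) atTop (𝓝 0) := by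
  have hdom : IntegrableOn (fun ξ : R2 => ((1 : ℝ) + ‖ξ‖ ^ 2) ^ s * B ^ 2) K :=
    ((continuous_one_add_norm_sq_rpow s).mul continuous_const).continuousOn.integrableOn_compact hK
  have h := tendsto_integral_of_dominated_convergence (μ := volume.restrict K) _
    (fun n => (aestronglyMeasurable_weight_mul_norm_sq s (hF n)).restrict) hdom
    (fun n => .of_forall fun ξ => by
      rw [Real.norm_of_nonneg (by positivity)]
      gcongr
      exact hB n ξ)
    (.of_forall fun ξ => ((hlim ξ).norm.pow 2).const_mul _)
  simpa using h

theorem tendsto_wnormSq_zero {F : ℕ → R2 → ℂ} {B : ℝ} (hst : s < t)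
    (hF : ∀ n, MemHs t (F n)) (hD : ∀ n, wnormSq t (F n) ≤ D) (hB : ∀ n ξ, ‖F n ξ‖ ≤ B)
    (hlim : ∀ ξ, Tendsto (fun n => F n ξ) atTop (𝓝 0)) :
    Tendsto (fun n => wnormSq s (F n)) atTop (𝓝 0) := by
  refine tendsto_order.2
    ⟨fun _ ha => .of_forall fun n => ha.trans_le (wnormSq_nonneg _ _), fun ε hε => ?_⟩
  have htail : Tendsto (fun R : ℝ => (1 + R ^ 2) ^ (s - t) * D) atTop (𝓝 0) := by
    have h := (tendsto_rpow_neg_atTop (sub_pos.2 hst)).comp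
      (tendsto_atTop_add_const_left atTop (1 : ℝ) (tendsto_pow_atTop two_ne_zero))
    simpa [Function.comp_def] using h.mul_const D
  obtain ⟨R, hRε, hR⟩ := ((htail.eventually_lt_const hε).and (eventually_ge_atTop 0)).exists
  have hball := (tendsto_setIntegral_weight_mul_norm_sq_zero (isCompact_closedBall 0 R) s
    (fun n => (hF n).1) hB hlim).const_mul ((2 * π) ^ 2)⁻¹ |>.add_const ((1 + R ^ 2) ^ (s - t) * D)
  rw [mul_zero, zero_add] at hball
  filter_upwards [hball.eventually_lt_const hRε] with n hn
  refine ((hF n).wnormSq_le_setIntegral_closedBall_add hst.le hR).trans_lt (lt_of_le_of_lt ?_ hn)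
  gcongr
  exact hD n

end SobolevNorm

section TestFT

theorem testFT_two_pi_smul (φ : R2 → ℂ) (w : R2) : testFT φ ((2 * π) • w) = 𝓕⁻ φ w := by
  rw [Real.fourierInv_eq', testFT]
  refine integral_congr_ae (.of_forall fun x => ?_)
  have hphase : Complex.I * (rdot x ((2 * π) • w) : ℂ) =
      ((2 * π * inner ℝ x w : ℝ) : ℂ) * Complex.I := by
    simp [rdot, PiLp.inner_apply, Fin.sum_univ_two]
    ring
  simp only [hphase, smul_eq_mul]

theorem integrable_testFT {φ : R2 → ℂ} (hφ : ContDiff ℝ ∞ φ) (hφ_supp : HasCompactSupport φ) :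
    Integrable (testFT φ) := by
  rw [← integrable_comp_smul_iff volume (testFT φ) (R := 2 * π) (by positivity)]
  simp_rw [testFT_two_pi_smul]
  have h := (𝓕⁻ (hφ_supp.toSchwartzMap hφ)).integrable (μ := volume)
  rwa [SchwartzMap.fourierInv_coe] at h

theorem integral_mul_testFT_eq_zero_of_tendsto {F : ℕ → R2 → ℂ} {L : R2 → ℂ} {B : ℝ}
    {φ : R2 → ℂ} (hφ : ContDiff ℝ ∞ φ) (hφ_supp : HasCompactSupport φ)
    (hF : ∀ n, AEStronglyMeasurable (F n)) (hB : ∀ n ξ, ‖F n ξ‖ ≤ B)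
    (hlim : ∀ ξ, Tendsto (fun n => F n ξ) atTop (𝓝 (L ξ)))
    (hzero : ∀ n, ∫ ξ, F n ξ * testFT φ ξ = 0) :
    ∫ ξ, L ξ * testFT φ ξ = 0 := by
  have hint := integrable_testFT hφ hφ_supp
  have h := tendsto_integral_of_dominated_convergence (μ := volume) (fun ξ => B * ‖testFT φ ξ‖)
    (fun n => (hF n).mul hint.aestronglyMeasurable) (hint.norm.const_mul B)
    (fun n => .of_forall fun ξ => by
      rw [Pi.mul_apply, norm_mul]
      gcongr
      exact hB n ξ)
    (.of_forall fun ξ => (hlim ξ).mul_const (testFT φ ξ))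
  refine tendsto_nhds_unique h ?_
  simp only [Pi.mul_apply, hzero]
  exact tendsto_const_nhds

end TestFT

namespace HTildeElt

variable {s t D : ℝ} {Γ : Set R2}

theorem memHs (V : HTildeElt s Γ) : MemHs s V.ft :=
  ⟨V.cont.aestronglyMeasurable, V.mem⟩

theorem integral_fourierInv_smul_ft_eq_zero (V : HTildeElt s Γ) {φ : R2 → ℂ}
    (hφ : ContDiff ℝ ∞ φ) (hφ_supp : HasCompactSupport φ) (hφΓ : tsupport φ ⊆ (closure Γ)ᶜ) :
    ∫ w, 𝓕⁻ φ w • V.ft ((2 * π) • w) = 0 := by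
  have h := Measure.integral_comp_smul volume (fun ξ => V.ft ξ * testFT φ ξ) (2 * π)
  rw [V.supp φ hφ hφ_supp (Set.disjoint_iff_inter_eq_empty.1
    (Set.subset_compl_iff_disjoint_right.1 hφΓ)), smul_zero] at h
  simpa only [testFT_two_pi_smul, smul_eq_mul, mul_comm (V.ft _)] using h

theorem memLp_ft_two_pi_smul (V : HTildeElt 0 Γ) :
    MemLp (fun w => V.ft ((2 * π) • w)) 2 := by
  have hcont := V.cont
  rw [memLp_two_iff_integrable_sq_norm (by fun_prop)]
  exact (integrable_comp_smul_iff volume (fun ξ => ‖V.ft ξ‖ ^ 2) (by positivity)).2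
    (by simpa using V.mem)

theorem norm_toLp_ft_two_pi_smul_sq (V : HTildeElt 0 Γ) :
    ‖V.memLp_ft_two_pi_smul.toLp _‖ ^ 2 = wnormSq 0 V.ft := by
  rw [norm_toLp_two_sq, Measure.integral_comp_smul volume (fun ξ => ‖V.ft ξ‖ ^ 2),
    finrank_euclideanSpace_fin, smul_eq_mul, abs_of_pos (by positivity)]
  simp [wnormSq]

theorem exists_ft_eq_fourier_indicator (hΓ : Bornology.IsBounded Γ) (V : HTildeElt 0 Γ) :
    ∃ f : Lp ℂ 2 (volume : Measure R2), ‖f‖ ^ 2 = wnormSq 0 V.ft ∧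
      ∀ ξ, V.ft ξ = 𝓕 ((closure Γ).indicator f) ((2 * π)⁻¹ • ξ) := by
  obtain ⟨f, hf_norm, hf⟩ := exists_eq_fourier_indicator hΓ.isCompact_closure
    (V.cont.comp (continuous_const_smul (2 * π))) V.memLp_ft_two_pi_smul
    fun _ hφ hφ_supp hφΓ => V.integral_fourierInv_smul_ft_eq_zero hφ hφ_supp hφΓ
  refine ⟨f, hf_norm ▸ V.norm_toLp_ft_two_pi_smul_sq, fun ξ => ?_⟩
  rw [← hf, Function.comp_apply, smul_inv_smul₀ (by positivity)]

theorem exists_subseq_tendsto_pointwise (hΓ : Bornology.IsBounded Γ) {V : ℕ → HTildeElt 0 Γ}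
    (hD : ∀ n, wnormSq 0 (V n).ft ≤ D) :
    ∃ φ : ℕ → ℕ, StrictMono φ ∧ ∃ L : R2 → ℂ, Continuous L ∧
      (∀ ξ, Tendsto (fun n => (V (φ n)).ft ξ) atTop (𝓝 (L ξ))) ∧
      ∃ B, ∀ n ξ, ‖(V n).ft ξ‖ ≤ B := by
  choose f hf_norm hf using fun n => exists_ft_eq_fourier_indicator hΓ (V n)
  have hfD : ∀ n, ‖f n‖ ≤ √D := fun n => Real.le_sqrt_of_sq_le ((hf_norm n).trans_le (hD n))
  have hK := hΓ.isCompact_closure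
  obtain ⟨φ, hφ, g, hg⟩ := exists_subseq_tendsto_fourier_indicator hK hfD
  refine ⟨φ, hφ, fun ξ => 𝓕 ((closure Γ).indicator g) ((2 * π)⁻¹ • ξ),
    (continuous_fourier_indicator hK g).comp (continuous_const_smul _), fun ξ => ?_,
    √(volume.real (closure Γ)) * √D, fun n ξ => ?_⟩
  · simpa only [hf] using hg ((2 * π)⁻¹ • ξ)
  · rw [hf]
    exact (norm_fourier_indicator_le hK _ _).trans (by gcongr; exact hfD n)

theorem exists_subseq_tendsto_wnormSq (hΓ : Bornology.IsBounded Γ) (ht : 0 ≤ t) (hst : s < t)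
    {V : ℕ → HTildeElt t Γ} (hD : ∀ n, wnormSq t (V n).ft ≤ D) :
    ∃ φ : ℕ → ℕ, StrictMono φ ∧ ∃ L : HTildeElt t Γ,
      Tendsto (fun n => wnormSq s (fun ξ => (V (φ n)).ft ξ - L.ft ξ)) atTop (𝓝 0) := by
  obtain ⟨φ, hφ, L, hL_cont, hlim, B, hB⟩ := exists_subseq_tendsto_pointwise hΓ
    (V := fun n => { V n with mem := ((V n).memHs.mono ht).2 })
    (fun n => ((V n).memHs.wnormSq_mono ht).trans (hD n))
  obtain ⟨hL, hLD⟩ := memHs_and_wnormSq_le_of_tendsto (fun n => (V (φ n)).memHs)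
    (fun n => hD (φ n)) hlim
  have hL_supp : ∀ ψ : R2 → ℂ, ContDiff ℝ ∞ ψ → HasCompactSupport ψ →
      tsupport ψ ∩ closure Γ = ∅ → ∫ ξ, L ξ * testFT ψ ξ = 0 := fun ψ hψ hψ_supp hψΓ =>
    integral_mul_testFT_eq_zero_of_tendsto hψ hψ_supp
      (fun n => (V (φ n)).cont.aestronglyMeasurable) (fun n => hB (φ n)) hlim
      (fun n => (V (φ n)).supp ψ hψ hψ_supp hψΓ)
  have hLB : ∀ ξ, ‖L ξ‖ ≤ B := fun ξ => le_of_tendsto' (hlim ξ).norm fun n => hB (φ n) ξ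
  refine ⟨φ, hφ, ⟨L, hL_cont, hL.2, hL_supp⟩, ?_⟩
  refine tendsto_wnormSq_zero hst (fun n => (V (φ n)).memHs.sub hL)
    (fun n => ((V (φ n)).memHs.wnormSq_sub_le hL).trans
      (add_le_add (mul_le_mul_of_nonneg_left (hD (φ n)) zero_le_two)
        (mul_le_mul_of_nonneg_left hLD zero_le_two)))
    (fun n ξ => (norm_sub_le _ _).trans (add_le_add (hB (φ n) ξ) (hLB ξ)))
    (fun ξ => by simpa using (hlim ξ).sub_const (L ξ))

end HTildeElt

section DivCurl

variable {s : ℝ} {F G : R2 → ℂ}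

theorem norm_dotFt_sq_add_norm_curlFt_sq (F G : R2 → ℂ) (ξ : R2) :
    ‖dotFt F G ξ‖ ^ 2 + ‖curlFt F G ξ‖ ^ 2 = ‖ξ‖ ^ 2 * (‖F ξ‖ ^ 2 + ‖G ξ‖ ^ 2) := by
  simp only [dotFt, curlFt, EuclideanSpace.real_norm_sq_eq, Fin.sum_univ_two,
    ← Complex.normSq_eq_norm_sq, Complex.normSq_apply, Complex.add_re, Complex.add_im,
    Complex.sub_re, Complex.sub_im, Complex.re_ofReal_mul, Complex.im_ofReal_mul]
  ring

theorem weight_mul_norm_sq_add_dotFt_add_curlFt (s : ℝ) (F G : R2 → ℂ) (ξ : R2) :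
    ((1 : ℝ) + ‖ξ‖ ^ 2) ^ s * ‖F ξ‖ ^ 2 + ((1 : ℝ) + ‖ξ‖ ^ 2) ^ s * ‖G ξ‖ ^ 2 +
        ((1 : ℝ) + ‖ξ‖ ^ 2) ^ s * ‖dotFt F G ξ‖ ^ 2 +
        ((1 : ℝ) + ‖ξ‖ ^ 2) ^ s * ‖curlFt F G ξ‖ ^ 2 =
      ((1 : ℝ) + ‖ξ‖ ^ 2) ^ (s + 1) * ‖F ξ‖ ^ 2 +
        ((1 : ℝ) + ‖ξ‖ ^ 2) ^ (s + 1) * ‖G ξ‖ ^ 2 := by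
  rw [Real.rpow_add_one (by positivity)]
  linear_combination ((1 : ℝ) + ‖ξ‖ ^ 2) ^ s * norm_dotFt_sq_add_norm_curlFt_sq F G ξ

theorem integrable_weight_add_one_mul_norm_sq_add (hF : MemHs s F) (hG : MemHs s G)
    (hdot : Integrable fun ξ => ((1 : ℝ) + ‖ξ‖ ^ 2) ^ s * ‖dotFt F G ξ‖ ^ 2)
    (hcurl : Integrable fun ξ => ((1 : ℝ) + ‖ξ‖ ^ 2) ^ s * ‖curlFt F G ξ‖ ^ 2) :
    Integrable fun ξ => ((1 : ℝ) + ‖ξ‖ ^ 2) ^ (s + 1) * ‖F ξ‖ ^ 2 +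
      ((1 : ℝ) + ‖ξ‖ ^ 2) ^ (s + 1) * ‖G ξ‖ ^ 2 := by
  simp_rw [← weight_mul_norm_sq_add_dotFt_add_curlFt]
  exact ((hF.2.add hG.2).add hdot).add hcurl

theorem memHs_add_one_of_dotFt_curlFt (hF : MemHs s F) (hG : MemHs s G)
    (hdot : Integrable fun ξ => ((1 : ℝ) + ‖ξ‖ ^ 2) ^ s * ‖dotFt F G ξ‖ ^ 2)
    (hcurl : Integrable fun ξ => ((1 : ℝ) + ‖ξ‖ ^ 2) ^ s * ‖curlFt F G ξ‖ ^ 2) :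
    MemHs (s + 1) F ∧ MemHs (s + 1) G :=
  have hsum := integrable_weight_add_one_mul_norm_sq_add hF hG hdot hcurl
  ⟨memHs_of_weight_mul_norm_sq_le hsum hF.1 fun _ => le_add_of_nonneg_right (by positivity),
    memHs_of_weight_mul_norm_sq_le hsum hG.1 fun _ => le_add_of_nonneg_left (by positivity)⟩

theorem wnormSq_add_dotFt_add_curlFt (hF : MemHs s F) (hG : MemHs s G)
    (hdot : Integrable fun ξ => ((1 : ℝ) + ‖ξ‖ ^ 2) ^ s * ‖dotFt F G ξ‖ ^ 2)
    (hcurl : Integrable fun ξ => ((1 : ℝ) + ‖ξ‖ ^ 2) ^ s * ‖curlFt F G ξ‖ ^ 2) :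
    wnormSq s F + wnormSq s G + wnormSq s (dotFt F G) + wnormSq s (curlFt F G) =
      wnormSq (s + 1) F + wnormSq (s + 1) G := by
  obtain ⟨hF₁, hG₁⟩ := memHs_add_one_of_dotFt_curlFt hF hG hdot hcurl
  simp only [wnormSq, ← mul_add]
  rw [← integral_add hF₁.2 hG₁.2]
  simp_rw [← weight_mul_norm_sq_add_dotFt_add_curlFt]
  rw [integral_add ?_ hcurl, integral_add ?_ hdot, integral_add hF.2 hG.2]
  exacts [hF.2.add hG.2, (hF.2.add hG.2).add hdot]

end DivCurl

theorem statement6_general (Γ : Set R2) (hΓ : Bornology.IsBounded Γ) {s : ℝ} (hs : -1 ≤ s)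
    (V1 V2 : ℕ → HTildeElt s Γ)
    (hdiv : ∀ n, Integrable (fun ξ : R2 =>
      ((1 : ℝ) + ‖ξ‖ ^ 2) ^ s * ‖dotFt (V1 n).ft (V2 n).ft ξ‖ ^ 2) volume)
    (hcurl : ∀ n, Integrable (fun ξ : R2 =>
      ((1 : ℝ) + ‖ξ‖ ^ 2) ^ s * ‖curlFt (V1 n).ft (V2 n).ft ξ‖ ^ 2) volume)
    (M : ℝ)
    (hbdd : ∀ n, wnormSq s (V1 n).ft + wnormSq s (V2 n).ft +
      wnormSq s (dotFt (V1 n).ft (V2 n).ft) + wnormSq s (curlFt (V1 n).ft (V2 n).ft) ≤ M) :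
    ∃ φ : ℕ → ℕ, StrictMono φ ∧ ∃ L1 L2 : HTildeElt s Γ,
      Tendsto (fun n =>
          wnormSq s (fun ξ => (V1 (φ n)).ft ξ - L1.ft ξ) +
          wnormSq s (fun ξ => (V2 (φ n)).ft ξ - L2.ft ξ))
        atTop (𝓝 0) := by
  have hmem := fun n =>
    memHs_add_one_of_dotFt_curlFt (V1 n).memHs (V2 n).memHs (hdiv n) (hcurl n)
  have hM : ∀ n, wnormSq (s + 1) (V1 n).ft + wnormSq (s + 1) (V2 n).ft ≤ M := fun n =>
    (wnormSq_add_dotFt_add_curlFt (V1 n).memHs (V2 n).memHs (hdiv n) (hcurl n)).symm.trans_le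
      (hbdd n)
  have hs₁ : 0 ≤ s + 1 := by linarith
  obtain ⟨φ, hφ, L1, hL1⟩ := HTildeElt.exists_subseq_tendsto_wnormSq hΓ hs₁ (lt_add_one s)
    (V := fun n => { V1 n with mem := (hmem n).1.2 })
    fun n => (le_add_of_nonneg_right (wnormSq_nonneg _ _)).trans (hM n)
  obtain ⟨χ, hχ, L2, hL2⟩ := HTildeElt.exists_subseq_tendsto_wnormSq hΓ hs₁ (lt_add_one s)
    (V := fun n => { V2 (φ n) with mem := (hmem (φ n)).2.2 })
    fun n => (le_add_of_nonneg_left (wnormSq_nonneg _ _)).trans (hM (φ n))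
  have hle : s ≤ s + 1 := (lt_add_one s).le
  refine ⟨φ ∘ χ, hφ.comp hχ, { L1 with mem := (L1.memHs.mono hle).2 },
    { L2 with mem := (L2.memHs.mono hle).2 }, ?_⟩
  simpa using (hL1.comp hχ.tendsto_atTop).add hL2

/-- the space `H̃^{-1/2}_div(Γ) ∩ H̃^{-1/2}_curl(Γ)` is compactly
embedded in `H`: every sequence of vector fields with components in `H̃^{-1/2}(Γ)`,
with distributional divergence and scalar curl in `H̃^{-1/2}(Γ)`, bounded in the
combined norm, has a subsequence converging in the norm of `H` to an element of `H`. -/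
theorem statement6 (Γ : Set R2) (hΓ : IsLipschitzDomain Γ)
    (V1 V2 : ℕ → HTildeElt (-(1/2) : ℝ) Γ)
    (hdiv : ∀ n, Integrable (fun ξ : R2 =>
      ((1 : ℝ) + ‖ξ‖ ^ 2) ^ (-(1/2) : ℝ) * ‖dotFt (V1 n).ft (V2 n).ft ξ‖ ^ 2) volume)
    (hcurl : ∀ n, Integrable (fun ξ : R2 =>
      ((1 : ℝ) + ‖ξ‖ ^ 2) ^ (-(1/2) : ℝ) * ‖curlFt (V1 n).ft (V2 n).ft ξ‖ ^ 2) volume)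
    (M : ℝ)
    (hbdd : ∀ n, wnormSq (-(1/2)) (V1 n).ft + wnormSq (-(1/2)) (V2 n).ft +
      wnormSq (-(1/2)) (dotFt (V1 n).ft (V2 n).ft) +
      wnormSq (-(1/2)) (curlFt (V1 n).ft (V2 n).ft) ≤ M) :
    ∃ φ : ℕ → ℕ, StrictMono φ ∧ ∃ L1 L2 : HTildeElt (-(1/2) : ℝ) Γ,
      Tendsto (fun n =>
          wnormSq (-(1/2)) (fun ξ => (V1 (φ n)).ft ξ - L1.ft ξ) +
          wnormSq (-(1/2)) (fun ξ => (V2 (φ n)).ft ξ - L2.ft ξ))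
        atTop (𝓝 0) := by
  exact statement6_general Γ hΓ.2.1 (by norm_num) V1 V2 hdiv hcurl M hbdd

end
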